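/- arXiv:2010.09261 — 2 statements merged into one kernel-verified Lean document; each statement's English description precedes it below -/
import Mathlib

section
/- Let H be a bounded linear operator on a complex Hilbert space ℋ. Then H is diagonalizable (i.e. there exists a bounded invertible operator G with bounded inverse such that G H G⁻¹ is normal) if and only if there exists a positive, self-adjoint, bounded invertible operator W on ℋ with bounded inverse such that H commutes with the weighted adjoint H‡ := W⁻¹ H* W, that is, H ∘ (W⁻¹ ∘ H* ∘ W) = (W⁻¹ ∘ H* ∘ W) ∘ H. -/
open ContinuousLinearMap

/-- A bounded operator `H` on a complex Hilbert space is *diagonalizable* if there is a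
bounded invertible operator `G` with bounded inverse such that `G H G⁻¹` is normal. -/
def Diagonalizable {𝓗 : Type*} [NormedAddCommGroup 𝓗] [InnerProductSpace ℂ 𝓗]
    [CompleteSpace 𝓗] (H : 𝓗 →L[ℂ] 𝓗) : Prop :=
  ∃ G Ginv : 𝓗 →L[ℂ] 𝓗, G ∘L Ginv = 1 ∧ Ginv ∘L G = 1 ∧
    (G ∘L H ∘L Ginv) ∘L adjoint (G ∘L H ∘L Ginv)
      = adjoint (G ∘L H ∘L Ginv) ∘L (G ∘L H ∘L Ginv)

/-!
Conjugating `H` by `G` turns the adjoint of `G H G⁻¹` into the adjoint of `H` weighted by `G* G`: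
`(G H G⁻¹)* = G ((G* G)⁻¹ H* (G* G)) G⁻¹`. Hence `G H G⁻¹` is normal exactly when `H` commutes with
that weighted adjoint, and the operators `G* G` with `G` invertible are exactly the positive
invertible ones: given `W`, take `G = √W`.
-/

section StarMonoid

theorem commute_units_conj_iff {M : Type*} [Monoid M] (u : Mˣ) {a b : M} :
    Commute (u * a * ↑u⁻¹) (u * b * ↑u⁻¹) ↔ Commute a b :=
  commute_map_iff (MulDistribMulAction.toMulEquiv M (ConjAct.toConjAct u)).injective

variable {A : Type*} [Monoid A] [StarMul A]

/-- The weighted adjoint `a‡ = w⁻¹ a* w` of `a`. The weight `w` is only required to be invertible,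
not positive, so that the notion needs no order on `A`. -/
def weightedStar (w : Aˣ) (a : A) : A :=
  ↑w⁻¹ * star a * w

theorem star_units_conj (u : Aˣ) (a : A) :
    star (u * a * ↑u⁻¹) = u * weightedStar (star u * u) a * ↑u⁻¹ := by
  simp only [weightedStar, star_mul, mul_inv_rev, Units.val_mul, Units.coe_star,
    Units.coe_star_inv, mul_assoc, Units.mul_inv, mul_one, Units.mul_inv_cancel_left]

theorem isStarNormal_units_conj_iff (u : Aˣ) (a : A) :
    IsStarNormal (u * a * ↑u⁻¹) ↔ Commute a (weightedStar (star u * u) a) := by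
  rw [isStarNormal_iff, star_units_conj, commute_units_conj_iff, Commute.symm_iff]

end StarMonoid

section StarOrderedRing

variable {A : Type*} [PartialOrder A] [Ring A] [StarRing A] [TopologicalSpace A]
  [StarOrderedRing A] [Algebra ℝ A] [ContinuousFunctionalCalculus ℝ A IsSelfAdjoint]
  [NonnegSpectrumClass ℝ A] [IsSemitopologicalRing A] [T2Space A]

theorem units_nonneg_iff_exists_eq_star_mul_self (w : Aˣ) :
    0 ≤ (w : A) ↔ ∃ u : Aˣ, w = star u * u := by
  rw [← w.isStrictlyPositive_iff, CStarAlgebra.isStrictlyPositive_iff_eq_star_mul_self]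
  constructor
  · rintro ⟨_, ⟨u, rfl⟩, hw⟩
    exact ⟨u, Units.ext hw⟩
  · rintro ⟨u, rfl⟩
    exact ⟨u, u.isUnit, rfl⟩

theorem diagonalizable_iff_commutes_with_weighted_adjoint_general (a : A) :
    (∃ u : Aˣ, IsStarNormal (u * a * ↑u⁻¹)) ↔
      ∃ w : Aˣ, 0 ≤ (w : A) ∧ Commute a (weightedStar w a) := by
  simp only [isStarNormal_units_conj_iff, units_nonneg_iff_exists_eq_star_mul_self]
  constructor
  · rintro ⟨u, hu⟩
    exact ⟨star u * u, ⟨u, rfl⟩, hu⟩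
  · rintro ⟨_, ⟨u, rfl⟩, hu⟩
    exact ⟨u, hu⟩

end StarOrderedRing

section Operator

variable {𝓗 : Type*} [NormedAddCommGroup 𝓗] [InnerProductSpace ℂ 𝓗] [CompleteSpace 𝓗]

theorem diagonalizable_iff_exists_isStarNormal_units_conj (H : 𝓗 →L[ℂ] 𝓗) :
    Diagonalizable H ↔ ∃ u : (𝓗 →L[ℂ] 𝓗)ˣ, IsStarNormal (u * H * ↑u⁻¹) := by
  constructor
  · rintro ⟨G, Ginv, hmul_inv, hinv_mul, hnormal⟩
    exact ⟨⟨G, Ginv, hmul_inv, hinv_mul⟩, ⟨hnormal.symm⟩⟩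
  · rintro ⟨u, hnormal⟩
    exact ⟨u, ↑u⁻¹, u.mul_inv, u.inv_mul, hnormal.star_comm_self.symm⟩

theorem exists_nonneg_units_commute_weightedStar_iff (H : 𝓗 →L[ℂ] 𝓗) :
    (∃ w : (𝓗 →L[ℂ] 𝓗)ˣ, 0 ≤ (w : 𝓗 →L[ℂ] 𝓗) ∧ Commute H (weightedStar w H)) ↔
      ∃ W Winv : 𝓗 →L[ℂ] 𝓗, W.IsPositive ∧ W ∘L Winv = 1 ∧ Winv ∘L W = 1 ∧
        H ∘L (Winv ∘L adjoint H ∘L W) = (Winv ∘L adjoint H ∘L W) ∘L H := by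
  simp only [nonneg_iff_isPositive]
  constructor
  · rintro ⟨w, hpos, hcomm⟩
    exact ⟨w, ↑w⁻¹, hpos, w.mul_inv, w.inv_mul, hcomm⟩
  · rintro ⟨W, Winv, hpos, hmul_inv, hinv_mul, hcomm⟩
    exact ⟨⟨W, Winv, hmul_inv, hinv_mul⟩, hpos, hcomm⟩

end Operator

theorem diagonalizable_iff_commutes_with_weighted_adjoint
    {𝓗 : Type*} [NormedAddCommGroup 𝓗] [InnerProductSpace ℂ 𝓗] [CompleteSpace 𝓗]
    (H : 𝓗 →L[ℂ] 𝓗) :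
    Diagonalizable H ↔
      ∃ W Winv : 𝓗 →L[ℂ] 𝓗, W.IsPositive ∧ W ∘L Winv = 1 ∧ Winv ∘L W = 1 ∧
        H ∘L (Winv ∘L adjoint H ∘L W) = (Winv ∘L adjoint H ∘L W) ∘L H := by
  rw [diagonalizable_iff_exists_isStarNormal_units_conj,
    diagonalizable_iff_commutes_with_weighted_adjoint_general,
    exists_nonneg_units_commute_weightedStar_iff]
end

section
/- Let H be a bounded normal operator on a complex Hilbert space ℋ (H H* = H* H), let U be a unitary operator, and suppose U ∘ H ∘ U* = μ·H* with μ = 1 or μ = −1 (a pseudo-hermiticity or chiral† symmetry). Then U commutes with the modulus of H: U ∘ √(H H*) ∘ U* = √(H H*). If moreover H is invertible with bounded inverse, then the phase V_H := H ∘ (√(H H*))⁻¹ satisfies U ∘ V_H ∘ U* = μ·(V_H)*. -/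
open ContinuousLinearMap

/-!
A star ring homomorphism `φ` preserves nonnegativity, so uniqueness of nonnegative square roots
gives `φ |h| = |φ h|`. If `φ h = μ • star h` with `|μ| = 1` and `h` normal, this reads
`φ |h| = |star h| = |h|`. Since `|h|` commutes with `h`, applying `φ` to the factors of `h |h|⁻¹`
gives the symmetry of the phase. The theorem is the case where `φ` is conjugation by `U`.
-/

section Abs

variable {A : Type*} [NonUnitalRing A] [StarRing A] [TopologicalSpace A] [Module ℝ A]
  [SMulCommClass ℝ A A] [IsScalarTower ℝ A A] [IsTopologicalRing A] [T2Space A]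
  [NonUnitalContinuousFunctionalCalculus ℝ A IsSelfAdjoint]
  [PartialOrder A] [StarOrderedRing A] [NonnegSpectrumClass ℝ A]

theorem map_cfcAbs {B F : Type*} [NonUnitalRing B] [StarRing B] [TopologicalSpace B] [Module ℝ B]
    [SMulCommClass ℝ B B] [IsScalarTower ℝ B B] [IsTopologicalRing B] [T2Space B]
    [NonUnitalContinuousFunctionalCalculus ℝ B IsSelfAdjoint]
    [PartialOrder B] [StarOrderedRing B] [NonnegSpectrumClass ℝ B]
    [FunLike F A B] [NonUnitalRingHomClass F A B] [NonUnitalStarRingHomClass F A B]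
    (φ : F) (a : A) :
    φ (CFC.abs a) = CFC.abs (φ a) := by
  have hsq : φ (CFC.abs a) * φ (CFC.abs a) = star (φ a) * φ a := by
    rw [← map_mul, CFC.abs_mul_abs, map_mul, map_star]
  exact (CFC.sqrt_unique hsq (map_nonneg φ (CFC.abs_nonneg a))).symm

theorem map_cfcAbs_eq_self_of_map_eq_smul_star {𝕜 F : Type*} [RCLike 𝕜] [Module 𝕜 A]
    [SMulCommClass 𝕜 A A] [IsScalarTower 𝕜 A A] [StarModule 𝕜 A] [StarModule ℝ A]
    [IsScalarTower ℝ 𝕜 A]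
    [FunLike F A A] [NonUnitalRingHomClass F A A] [NonUnitalStarRingHomClass F A A]
    (φ : F) {a : A} [IsStarNormal a] {μ : 𝕜} (hμ : ‖μ‖ = 1) (hφ : φ a = μ • star a) :
    φ (CFC.abs a) = CFC.abs a := by
  rw [map_cfcAbs, hφ, CFC.abs_smul, hμ, one_smul, CFC.abs_star a]

end Abs

theorem map_mul_units_inv_eq_smul_star {M R F : Type*} [Monoid M] [StarMul M] [SMul R M]
    [IsScalarTower R M M] [FunLike F M M] [MonoidHomClass F M M] (φ : F) {a : M} {s : Mˣ} {c : R}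
    (hs : IsSelfAdjoint s) (hcomm : Commute (s : M) a) (hφs : φ s = s)
    (hφa : φ a = c • star a) :
    φ (a * ↑s⁻¹) = c • star (a * ↑s⁻¹) := by
  have hφ_inv : φ ↑s⁻¹ = ↑s⁻¹ :=
    (Units.inv_eq_of_mul_eq_one_right (by rw [← hφs, ← map_mul, s.mul_inv, map_one])).symm
  have hstar_inv : star (↑s⁻¹ : M) = ↑s⁻¹ := by rw [← Units.coe_star, star_inv, hs.star_eq]
  calc φ (a * ↑s⁻¹) = c • (star a * ↑s⁻¹) := by rw [map_mul, hφa, hφ_inv, smul_mul_assoc]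
    _ = c • star (↑s⁻¹ * a) := by rw [star_mul, hstar_inv]
    _ = c • star (a * ↑s⁻¹) := by rw [hcomm.units_inv_left.eq]

theorem dagger_symmetry_commutes_with_modulus_and_phase_general
    {A F : Type*} [CStarAlgebra A] [PartialOrder A] [StarOrderedRing A]
    [FunLike F A A] [RingHomClass F A A] [NonUnitalStarRingHomClass F A A]
    (φ : F) {h s : A} [IsStarNormal h] {μ : ℂ} (hμ : ‖μ‖ = 1) (hφ : φ h = μ • star h)
    (hs : 0 ≤ s) (hsq : s * s = h * star h) :
    φ s = s ∧ ∀ r : A, s * r = 1 → r * s = 1 → φ (h * r) = μ • star (h * r) := by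
  obtain rfl : CFC.abs h = s := CFC.sqrt_unique (hsq.trans (star_comm_self' h).symm) hs
  have hφs : φ (CFC.abs h) = CFC.abs h := map_cfcAbs_eq_self_of_map_eq_smul_star φ hμ hφ
  refine ⟨hφs, fun r hsr hrs ↦ ?_⟩
  let s : Aˣ := ⟨CFC.abs h, r, hsr, hrs⟩
  have hs_star : IsSelfAdjoint s := Units.ext hs.isSelfAdjoint
  exact map_mul_units_inv_eq_smul_star φ hs_star (CFC.commute_abs_self h) hφs hφ

/-- If `H` is normal and a unitary `U` satisfies `U H U* = μ H*` with `μ = ±1`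
(pseudo-hermiticity or chiral† symmetry), then `U` commutes with the modulus `√(H H*)`
(the unique positive self-adjoint square root of `H H*`); and if `H` is invertible, the
phase `V_H = H ∘ √(H H*)⁻¹` satisfies `U V_H U* = μ (V_H)*`. -/
theorem dagger_symmetry_commutes_with_modulus_and_phase
    {𝓗 : Type*} [NormedAddCommGroup 𝓗] [InnerProductSpace ℂ 𝓗] [CompleteSpace 𝓗]
    (H U S : 𝓗 →L[ℂ] 𝓗) (μ : ℂ) (hμ : μ = 1 ∨ μ = -1)
    (hnormal : H ∘L adjoint H = adjoint H ∘L H)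
    (hU1 : adjoint U ∘L U = 1) (hU2 : U ∘L adjoint U = 1)
    (hsym : U ∘L H ∘L adjoint U = μ • adjoint H)
    (hS : S.IsPositive) (hSsq : S ∘L S = H ∘L adjoint H) :
    U ∘L S ∘L adjoint U = S ∧
      ∀ Hinv Sinv : 𝓗 →L[ℂ] 𝓗,
        H ∘L Hinv = 1 → Hinv ∘L H = 1 → S ∘L Sinv = 1 → Sinv ∘L S = 1 →
        U ∘L (H ∘L Sinv) ∘L adjoint U = μ • adjoint (H ∘L Sinv) := by
  have : IsStarNormal H := ⟨hnormal.symm⟩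
  have hμ_norm : ‖μ‖ = 1 := by rcases hμ with rfl | rfl <;> simp
  obtain ⟨hmodulus, hphase⟩ := dagger_symmetry_commutes_with_modulus_and_phase_general
    (Unitary.conjStarAlgAut ℂ _ ⟨U, hU1, hU2⟩) hμ_norm hsym (S.nonneg_iff_isPositive.2 hS) hSsq
  exact ⟨hmodulus, fun _ Sinv _ _ ↦ hphase Sinv⟩
end
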